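/- arXiv:1710.02629 — 4 statements merged into one kernel-verified Lean document; each statement's English description precedes it below -/
import Mathlib

section
/- The code Q is totally isotropic with respect to the quadratic form q³⁵ on (ℤ/35ℤ)³² given by q(n) = 6n²/35 mod 2ℤ; that is, for every codeword w ∈ Q, Σ_{ν ∈ P¹(F₃₁)} 6·ŵ(ν)² ≡ 0 (mod 70), where ŵ(ν) ∈ ℤ denotes any integer lift of w(ν) ∈ ℤ/35ℤ. Moreover the cardinality of Q is 35¹⁶. -/
/-!
The dot product of two generators `v_μ`, `v_μ'` depends only on `μ' - μ` (the finite part of the code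
is cyclic), and a computation with the quadratic residues mod 31 shows that it always vanishes in
`ℤ/35ℤ`. Hence `Q` is self-orthogonal (`dot_eq_zero`), and since `6·35 ≡ 0 (mod 70)` this gives
isotropy for the form `6n²/35`.

For the cardinality, write elements of `(ℤ/35ℤ)^{F₃₁}` as polynomials modulo `x³¹ - 1`. The code
contains a word whose finite part is a monic polynomial `g` of degree 15; its 16 shifts `xⁱ g` form a
generator matrix `(G₁ | G₂)`, where `G₁`, given by the coordinates `15, …, 30`, is unitriangular.
Restriction to these 16 coordinates is then a bijection `Q → (ℤ/35ℤ)¹⁶`.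
It is surjective because `G₁` is invertible. It is injective because self-orthogonality gives
`G₂ G₂ᵀ = -G₁ G₁ᵀ`, so `G₂` is invertible as well, and a word of `Q` vanishing on the coordinates of
`G₁` is orthogonal to the rows of `G₂` on the remaining ones.
-/


noncomputable section

/-- The projective line over `F₃₁`: `none` is the point `∞`. -/
abbrev P1 : Type := Option (ZMod 31)

/-- The generator `v_μ` of the generalized quadratic residue code `Q` with
parameters `(a,b,d,s,t,e) = (0,0,1,7,3,2)`:
`v_μ(μ) = 1`, `v_μ(ν) = 7` if `χ(μ-ν) = 1`, `v_μ(ν) = 3` if `χ(μ-ν) = -1`, `v_μ(∞) = 2`. -/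
def vgen (μ : ZMod 31) : P1 → ZMod 35 := fun ν =>
  match ν with
  | none => 2
  | some ν' => if ν' = μ then 1 else if IsSquare (μ - ν') then 7 else 3

/-- The generalized quadratic residue code `Q`, a subgroup of `(ℤ/35ℤ)^{P¹(F₃₁)}`. -/
def Qcode : AddSubgroup (P1 → ZMod 35) := AddSubgroup.closure (Set.range vgen)

open Matrix

/-! ### Self-orthogonality -/

lemma vgen_shift (μ ν c : ZMod 31) : vgen (μ + c) (some (ν + c)) = vgen μ (some ν) := by
  simp [vgen]

/-- Values of `v_μ(ν)` as a function of `μ - ν ∈ F₃₁`, as natural numbers: the kernel evaluates sums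
of such numbers much faster than sums in `ZMod 35`. -/
def valTable : Fin 31 → ℕ :=
  ![1, 7, 7, 3, 7, 7, 3, 7, 7, 7, 7, 3, 3, 3, 7, 3, 7, 3, 7, 7, 7, 3, 3, 3, 3, 7, 3, 3, 7, 3, 3]

lemma valTable_spec : ∀ x : ZMod 31,
    (if x = 0 then (1 : ZMod 35) else if IsSquare x then 7 else 3) = (valTable x : ZMod 35) := by
  decide +kernel

lemma vgen_eq (μ ν : ZMod 31) : vgen μ (some ν) = (valTable (μ - ν) : ZMod 35) := by
  rw [← valTable_spec]
  simp only [vgen, sub_eq_zero, eq_comm]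

lemma valTable_dot : ∀ d : Fin 31,
    (2 * 2 + ∑ ν : Fin 31, valTable (0 - ν) * valTable (d - ν)) % 35 = 0 := by
  decide +kernel

lemma vgen_dot_zero (d : ZMod 31) :
    2 * 2 + ∑ ν : ZMod 31, vgen 0 (some ν) * vgen d (some ν) = 0 := by
  have h := (ZMod.natCast_eq_zero_iff _ 35).2 (Nat.dvd_of_mod_eq_zero (valTable_dot d))
  push_cast at h
  simp only [vgen_eq]
  exact h

lemma vgen_dot (μ μ' : ZMod 31) : vgen μ ⬝ᵥ vgen μ' = 0 := by
  have h (ν : ZMod 31) : vgen ν none = 2 := rfl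
  rw [dotProduct, Fintype.sum_option, h, h, ← vgen_dot_zero (μ' - μ), add_right_inj,
    ← Equiv.sum_comp (Equiv.addRight μ)]
  refine Finset.sum_congr rfl fun ν _ => ?_
  have h1 := vgen_shift 0 ν μ
  have h2 := vgen_shift (μ' - μ) ν μ
  rw [zero_add] at h1
  rw [sub_add_cancel] at h2
  simp only [Equiv.coe_addRight, h1, h2]

lemma dot_eq_zero {w w' : P1 → ZMod 35} (hw : w ∈ Qcode) (hw' : w' ∈ Qcode) :
    w ⬝ᵥ w' = 0 := by
  induction hw using AddSubgroup.closure_induction with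
  | mem x hx =>
    obtain ⟨μ, rfl⟩ := hx
    induction hw' using AddSubgroup.closure_induction with
    | mem y hy => obtain ⟨μ', rfl⟩ := hy; exact vgen_dot μ μ'
    | zero => simp
    | add y z _ _ hy hz => rw [dotProduct_add, hy, hz, add_zero]
    | neg y _ hy => rw [dotProduct_neg, hy, neg_zero]
  | zero => simp
  | add y z _ _ hy hz => rw [add_dotProduct, hy, hz, add_zero]
  | neg y _ hy => rw [neg_dotProduct, hy, neg_zero]

/-! ### The generator matrix -/

/-- Coefficients, with respect to `v_0, …, v_15`, of a codeword whose finite part is a monic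
polynomial of degree 15. They solve the linear system requiring coordinate `15` to be `1` and
coordinates `16, …, 30` to be `0`, reduced modulo 35. -/
def coef : Fin 16 → ℕ := ![25, 11, 16, 4, 28, 30, 31, 9, 29, 1, 5, 13, 34, 16, 21, 10]

/-- The rows of the generator matrix: row `i` is the shift by `i` of the codeword
`∑ m, coef m • v_m`. -/
def genRow (i : Fin 16) : P1 → ZMod 35 :=
  ∑ m : Fin 16, (coef m : ZMod 35) • vgen ((m.val : ZMod 31) + (i.val : ZMod 31))

/-- The information coordinates `15, …, 30`. -/
def infoPt (j : Fin 16) : P1 := some ((15 + j.val : ℕ) : ZMod 31)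

/-- The remaining coordinates `0, …, 14, ∞`. -/
def checkPt (j : Fin 16) : P1 := if j.val = 15 then none else some (j.val : ZMod 31)

lemma split_bijective : Function.Bijective (Sum.elim infoPt checkPt) := by
  rw [Fintype.bijective_iff_injective_and_card]
  exact ⟨by decide +kernel, by simp [P1, ZMod.card]⟩

lemma dot_split (w w' : P1 → ZMod 35) :
    w ⬝ᵥ w' = (w ∘ infoPt) ⬝ᵥ (w' ∘ infoPt) + (w ∘ checkPt) ⬝ᵥ (w' ∘ checkPt) := by
  simp only [dotProduct]
  rw [← Equiv.sum_comp (Equiv.ofBijective _ split_bijective), Fintype.sum_sum_type]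
  rfl

lemma genRow_mem (i : Fin 16) : genRow i ∈ Qcode :=
  sum_mem fun _ _ => ZMod.smul_mem (AddSubgroup.subset_closure (Set.mem_range_self _)) _

lemma base_word_nat : ∀ k : Fin 16,
    (∑ m : Fin 16, coef m * valTable (Fin.ofNat 31 m.val - Fin.ofNat 31 (15 + k.val))) % 35 =
      (if k = 0 then 1 else 0) % 35 := by
  decide +kernel

lemma base_word (k : Fin 16) :
    ∑ m : Fin 16, (coef m : ZMod 35) *
        vgen (m.val : ZMod 31) (some ((15 + k.val : ℕ) : ZMod 31)) =
      if k = 0 then 1 else 0 := by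
  have h := (ZMod.natCast_eq_natCast_iff' _ _ 35).2 (base_word_nat k)
  simp only [Nat.cast_sum, Nat.cast_mul, Nat.cast_ite, Nat.cast_one, Nat.cast_zero] at h
  simp only [vgen_eq]
  exact h

lemma genRow_info {i j : Fin 16} (h : i ≤ j) : genRow i (infoPt j) = if i = j then 1 else 0 := by
  have hk : j.val - i.val < 16 := by omega
  have h0 := base_word ⟨j.val - i.val, hk⟩
  have he : ((15 + j.val : ℕ) : ZMod 31) = ((15 + (j.val - i.val) : ℕ) : ZMod 31) + i.val := by
    rw [← Nat.cast_add]; congr 1; have : i.val ≤ j.val := h; omega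
  have hc : ((⟨j.val - i.val, hk⟩ : Fin 16) = 0) ↔ i = j := by
    have : i.val ≤ j.val := h
    simp only [Fin.ext_iff, Fin.val_zero]; omega
  simp only [hc] at h0
  rw [← h0]
  simp only [genRow, infoPt, Finset.sum_apply, Pi.smul_apply, smul_eq_mul, he, vgen_shift]

/-- The block `G₁` of the generator matrix. -/
def infoBlock : Matrix (Fin 16) (Fin 16) (ZMod 35) := of fun i j => genRow i (infoPt j)

/-- The block `G₂` of the generator matrix. -/
def checkBlock : Matrix (Fin 16) (Fin 16) (ZMod 35) := of fun i j => genRow i (checkPt j)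

lemma infoBlock_det : infoBlock.det = 1 := by
  rw [det_of_isLowerTriangular]
  · exact Finset.prod_eq_one fun i _ => (genRow_info (le_refl i)).trans (if_pos rfl)
  · intro i j hij
    have hij' : i < j := hij
    exact (genRow_info hij'.le).trans (if_neg hij'.ne)

lemma checkBlock_det : IsUnit checkBlock.det := by
  have h : checkBlock * checkBlockᵀ = -(infoBlock * infoBlockᵀ) := by
    ext i j
    have := dot_split (genRow i) (genRow j)
    rw [dot_eq_zero (genRow_mem i) (genRow_mem j)] at this
    have h1 : (infoBlock * infoBlockᵀ) i j = (genRow i ∘ infoPt) ⬝ᵥ (genRow j ∘ infoPt) := rfl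
    have h2 : (checkBlock * checkBlockᵀ) i j = (genRow i ∘ checkPt) ⬝ᵥ (genRow j ∘ checkPt) := rfl
    rw [neg_apply, h1, h2]
    exact eq_neg_of_add_eq_zero_right this.symm
  have h2 := congrArg det h
  rw [det_mul, det_transpose, det_neg, det_mul, det_transpose, infoBlock_det] at h2
  refine IsUnit.of_mul_eq_one checkBlock.det ?_
  rw [h2, Fintype.card_fin, Even.neg_one_pow (by decide), one_mul, one_mul]

/-! ### Restriction to the information coordinates -/

lemma restrict_bijective :
    Function.Bijective (fun w : Qcode => (w : P1 → ZMod 35) ∘ infoPt) := by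
  constructor
  · intro w w' h
    have hd : ∀ i, (w.1 - w'.1) (infoPt i) = 0 := fun i => by
      have hi : w.1 (infoPt i) = w'.1 (infoPt i) := congrFun h i
      rw [Pi.sub_apply, hi, sub_self]
    have hm : w.1 - w'.1 ∈ Qcode := sub_mem w.2 w'.2
    have hc : checkBlock *ᵥ ((w.1 - w'.1) ∘ checkPt) = 0 := by
      ext i
      have := dot_split (genRow i) (w.1 - w'.1)
      rw [dot_eq_zero (genRow_mem i) hm, show (w.1 - w'.1) ∘ infoPt = 0 from funext hd,
        dotProduct_zero, zero_add] at this
      have he : (checkBlock *ᵥ ((w.1 - w'.1) ∘ checkPt)) i =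
        (genRow i ∘ checkPt) ⬝ᵥ ((w.1 - w'.1) ∘ checkPt) := rfl
      rw [he, ← this, Pi.zero_apply]
    have hz : (w.1 - w'.1) ∘ checkPt = 0 := by
      rw [← one_mulVec ((w.1 - w'.1) ∘ checkPt), ← nonsing_inv_mul _ checkBlock_det,
        ← mulVec_mulVec, hc, mulVec_zero]
    refine Subtype.ext (funext fun ν => ?_)
    rw [← sub_eq_zero, ← Pi.sub_apply]
    obtain ⟨i | i, rfl⟩ := split_bijective.2 ν
    · exact hd i
    · exact congrFun hz i
  · intro a
    have h : a ᵥ* infoBlock⁻¹ ᵥ* infoBlock = a := by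
      rw [vecMul_vecMul, nonsing_inv_mul _ (infoBlock_det.symm ▸ isUnit_one), vecMul_one]
    generalize a ᵥ* infoBlock⁻¹ = k at h
    obtain ⟨w, hw, hs⟩ : ∃ w ∈ Qcode, ∀ ν, w ν = ∑ i, k i * genRow i ν :=
      ⟨∑ i, k i • genRow i, sum_mem fun i _ => ZMod.smul_mem (genRow_mem i) (k i), fun ν => by
        simp only [Finset.sum_apply, Pi.smul_apply, smul_eq_mul]⟩
    have hj (j : Fin 16) : ∑ i, k i * genRow i (infoPt j) = a j := congrFun h j
    exact ⟨⟨w, hw⟩, funext fun j => (hs (infoPt j)).trans (hj j)⟩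

/-- The code `Q` is totally isotropic with respect to the quadratic form
`q(n) = 6n²/35 mod 2ℤ` on `(ℤ/35ℤ)³²`: for every codeword `w ∈ Q` and every integer lift
`ŵ` of `w`, `Σ_ν 6·ŵ(ν)² ≡ 0 (mod 70)`.  Moreover `|Q| = 35¹⁶`. -/
theorem stmt_3 :
    (∀ w ∈ Qcode, ∀ lift : P1 → ℤ, (∀ ν : P1, ((lift ν : ZMod 35) = w ν)) →
      (70 : ℤ) ∣ ∑ ν : P1, 6 * (lift ν) ^ 2) ∧
    Nat.card Qcode = 35 ^ 16 := by
  constructor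
  · intro w hw lift hl
    have h : (35 : ℤ) ∣ ∑ ν : P1, lift ν ^ 2 := by
      refine (ZMod.intCast_zmod_eq_zero_iff_dvd _ 35).1 ?_
      have := dot_eq_zero hw hw
      simp only [dotProduct] at this
      simp only [Int.cast_sum, pow_two, Int.cast_mul, hl, this]
    rw [← Finset.mul_sum]
    omega
  · rw [Nat.card_eq_of_bijective _ restrict_bijective, Nat.card_fun, Nat.card_zmod, Nat.card_fin]
end
end

section
/- Let x = (x_ν)_{ν ∈ P¹(F₃₁)} be a tuple with each x_ν ∈ {1, −1, 6, −6} ⊆ (ℤ/35ℤ)ˣ, acting on (ℤ/35ℤ)^{P¹(F₃₁)} by componentwise multiplication. Then x maps the code Q onto itself if and only if all components of x are equal, i.e., x₁ = x₂ = ⋯ = x₃₂ ∈ {1, −1, 6, −6}. -/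
/-!
The code `Q` is self-orthogonal. Hence, if `x` maps `Q` into itself, then `x v_μ` is orthogonal to
`v_μ`, which says `∑_ν x_ν v_μ(ν)² = 0` for every `μ`. Since also `∑_ν v_μ(ν)² = 0`, the vector
`y_ν = x_ν - x_∞` on `F₃₁` satisfies `∑_{ν ∈ F₃₁} y_ν v_μ(ν)² = 0` for every `μ`, that is, its
convolution with the square of the function `profile : F₃₁ → ℤ/35ℤ` (equal to `1`, `7`, `3` at
zero, the nonzero squares and the nonsquares) vanishes. This convolution operator is invertible
over `ℤ/35ℤ`, with an inverse that is again constant on quadratic classes (`invKernel`), so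
`y = 0` (`eq_zero_of_conv`) and `x` is constant.

Conversely, multiplication by a scalar preserves every subgroup, and each `c ∈ {1, -1, 6, -6}`
satisfies `c² = 1`, so it maps `Q` onto `Q`.
-/

noncomputable section

/-- The profile of the generators on the affine line: `v_μ(ν) = profile (μ - ν)` for `ν ∈ F₃₁`. -/
def profile (t : ZMod 31) : ZMod 35 := if t = 0 then 1 else if IsSquare t then 7 else 3

/-- The convolution inverse of `profile ^ 2` on the group `F₃₁` with values in `ℤ/35ℤ`.
Its three values solve the linear system obtained by requiring the convolution, which is again
constant on zero, the nonzero squares and the nonsquares, to be the delta function at `0`. -/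
def invKernel (t : ZMod 31) : ZMod 35 := if t = 0 then 11 else if IsSquare t then 23 else 13

theorem vgen_some (μ ν : ZMod 31) : vgen μ (some ν) = profile (μ - ν) := by
  simp only [vgen, profile, sub_eq_zero, eq_comm]

/-- The inner products `v_μ · v_ν`, as a function of `d = μ - ν`; the term `4 = 2 * 2` comes
from the coordinate at `∞`. -/
theorem profile_corr :
    ∀ d : ZMod 31, 4 + ∑ t : ZMod 31, profile (t + d) * profile t = 0 := by
  decide +kernel

theorem invKernel_conv : ∀ t : ZMod 31,
    ∑ s : ZMod 31, invKernel (t - s) * (profile s * profile s) = if t = 0 then 1 else 0 := by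
  decide +kernel

theorem vgen_dot_vgen (μ ν : ZMod 31) : ∑ i : P1, vgen μ i * vgen ν i = 0 := by
  have hinf : vgen μ none * vgen ν none = 4 := by simp only [vgen]; norm_num
  rw [Fintype.sum_option, ← profile_corr (μ - ν), hinf, add_right_inj]
  simp only [vgen_some]
  refine Fintype.sum_equiv (Equiv.subLeft ν) _ _ fun i => ?_
  rw [Equiv.subLeft_apply, sub_add_sub_comm, add_comm ν μ, add_comm i ν, add_sub_add_comm]
  simp

/-- Self-orthogonality of `Q` for the standard bilinear form, in the case where one factor is
a generator. -/
theorem dot_vgen_of_mem {w : P1 → ZMod 35} (hw : w ∈ Qcode) (ν : ZMod 31) :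
    ∑ i : P1, w i * vgen ν i = 0 := by
  induction hw using AddSubgroup.closure_induction with
  | mem w h =>
    obtain ⟨μ, rfl⟩ := h
    exact vgen_dot_vgen μ ν
  | zero => simp
  | add a b _ _ ha hb => simp [add_mul, Finset.sum_add_distrib, ha, hb]
  | neg a _ ha => simp [ha]

/-- Convolution with `profile ^ 2` is injective, being inverted by `invKernel`. -/
theorem eq_zero_of_conv {y : ZMod 31 → ZMod 35}
    (h : ∀ μ, ∑ ν, y ν * (profile (μ - ν) * profile (μ - ν)) = 0) (l : ZMod 31) : y l = 0 := by
  have key : ∀ ν, ∑ μ, invKernel (l - μ) * (profile (μ - ν) * profile (μ - ν))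
      = if l = ν then 1 else 0 := by
    intro ν
    have e := invKernel_conv (l - ν)
    simp only [sub_eq_zero] at e
    rw [← e]
    refine Fintype.sum_equiv (Equiv.subRight ν) _ _ fun i => ?_
    simp only [Equiv.subRight_apply, sub_sub_sub_cancel_right]
  calc y l = ∑ ν, y ν * (if l = ν then 1 else 0) := by simp
    _ = ∑ ν, ∑ μ, invKernel (l - μ) * (y ν * (profile (μ - ν) * profile (μ - ν))) := by
        refine Finset.sum_congr rfl fun ν _ => ?_
        rw [← key ν, Finset.mul_sum]
        exact Finset.sum_congr rfl fun μ _ => by ring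
    _ = ∑ μ, invKernel (l - μ) * ∑ ν, y ν * (profile (μ - ν) * profile (μ - ν)) := by
        rw [Finset.sum_comm]
        simp only [Finset.mul_sum]
    _ = 0 := by simp [h]

theorem mul_mem_Qcode (c : ZMod 35) {w : P1 → ZMod 35} (hw : w ∈ Qcode) :
    (fun ν => c * w ν) ∈ Qcode := by
  have : (fun ν => c * w ν) = c.val • w := by
    ext ν
    simp [nsmul_eq_mul]
  rw [this]
  exact Qcode.nsmul_mem hw _

/-- Let `x = (x_ν)` be a tuple with components in `{1, -1, 6, -6} ⊆ (ℤ/35ℤ)ˣ`, acting on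
`(ℤ/35ℤ)^{P¹(F₃₁)}` by componentwise multiplication.  Then `x` maps the code `Q` onto
itself if and only if all components of `x` are equal. -/
theorem stmt_4 (x : P1 → ZMod 35)
    (hx : ∀ ν : P1, x ν ∈ ({1, -1, 6, -6} : Set (ZMod 35))) :
    ((fun w : P1 → ZMod 35 => fun ν : P1 => x ν * w ν) '' (Qcode : Set (P1 → ZMod 35))
        = (Qcode : Set (P1 → ZMod 35)))
      ↔ ∃ c : ZMod 35, ∀ ν : P1, x ν = c := by
  constructor
  · intro h
    refine ⟨x none, fun ν => ?_⟩
    cases ν with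
    | none => rfl
    | some l =>
      rw [← sub_eq_zero]
      refine eq_zero_of_conv (y := fun ν => x (some ν) - x none) (fun μ => ?_) l
      have hmem : (fun ν => x ν * vgen μ ν) ∈ Qcode := by
        rw [← SetLike.mem_coe, ← h]
        exact ⟨vgen μ, AddSubgroup.subset_closure ⟨μ, rfl⟩, rfl⟩
      have h1 := dot_vgen_of_mem hmem μ
      have h2 := vgen_dot_vgen μ μ
      rw [Fintype.sum_option] at h1 h2
      simp only [vgen_some] at h1 h2
      simp only [sub_mul, Finset.sum_sub_distrib, ← mul_assoc] at h1 h2 ⊢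
      simp only [mul_assoc, ← Finset.mul_sum] at h1 h2 ⊢
      linear_combination h1 - x none * h2
  · rintro ⟨c, hc⟩
    have hcc : c * c = 1 := by
      have := hx none
      rw [hc] at this
      rcases this with rfl | rfl | rfl | rfl <;> decide
    simp only [hc]
    ext w
    constructor
    · rintro ⟨w, hw, rfl⟩
      exact mul_mem_Qcode c hw
    · intro hw
      refine ⟨_, mul_mem_Qcode c hw, ?_⟩
      ext ν
      simp only [← mul_assoc, hcc, one_mul]
end
end

section
/- For n ∈ ℤ/35ℤ let λ(n) = min{⟨x,x⟩ : x ∈ R∨, x ≡ n·u (mod R)}. Then λ(n) = λ(−n) for all n, and 35·λ(n) equals: 0, 6, 24, 54, 26, 10, 6, 14, 34, 66, 40, 26, 24, 34, 56, 90, 66, 54 for n = 0, ±1, ±2, ±3, ±4, ±5, ±6, ±7, ±8, ±9, ±10, ±11, ±12, ±13, ±14, ±15, ±16, ±17 respectively. -/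
/-!
The Gram matrix `G` carries `R∨` isomorphically onto `ℤ²` and turns `35⟨x,x⟩` into the integral
form `6p² - 2pq + 6q²`, while the class of `x` in `D_R ≅ ℤ/35ℤ` becomes `q - 6p` modulo `35`
(`mem_normSet_iff`). The symmetry `λ(n) = λ(-n)` is then `(p, q) ↦ (-p, -q)`.

For the values, `6(6p² - 2pq + 6q²) = (6p - q)² + 35q² = (6q - p)² + 35p²`, so the form is at
least `90`, the largest value in the table, unless `|p|, |q| ≤ 3`. Inside that box the table is
a lower bound, and it is attained there in every class; both are finite checks over the integers.
-/

noncomputable section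

/-- The generator `u = (34 e₁ + 6 e₂)/35` of the discriminant group `D_R = R∨/R ≅ ℤ/35ℤ`. -/
def uvec : Fin 2 → ℚ := ![34/35, 6/35]

/-- The bilinear form `⟨x,y⟩ = xᵀ G y` on `ℚ²`, with `G = [[6,1],[1,6]]`. -/
def B2 (x y : Fin 2 → ℚ) : ℚ :=
  6 * x 0 * y 0 + x 0 * y 1 + x 1 * y 0 + 6 * x 1 * y 1

/-- Membership in the lattice `R = ℤ² ⊆ ℚ²`. -/
def inRlat (x : Fin 2 → ℚ) : Prop := ∀ i, ∃ k : ℤ, x i = (k : ℚ)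

/-- The dual lattice `R∨ = {x ∈ ℚ² : ⟨x,v⟩ ∈ ℤ for all v ∈ R}`. -/
def Rdual : Set (Fin 2 → ℚ) :=
  {x | ∀ v : Fin 2 → ℤ, ∃ k : ℤ, B2 x (fun i => (v i : ℚ)) = (k : ℚ)}

/-- The set of square-norms `⟨x,x⟩` of vectors `x ∈ R∨` with `x ≡ n·u (mod R)`;
its least element is `λ(n)`. -/
def normSet (n : ZMod 35) : Set ℚ :=
  {c | ∃ x : Fin 2 → ℚ, x ∈ Rdual ∧
    (∃ m : ℤ, (m : ZMod 35) = n ∧ inRlat (x - (m : ℚ) • uvec)) ∧ c = B2 x x}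

/-- The table of the values `35·λ(n)` for `n = 0, 1, …, 34` (symmetric: `λ(n) = λ(-n)`). -/
def lamTable (k : ℕ) : ℚ :=
  [0, 6, 24, 54, 26, 10, 6, 14, 34, 66, 40, 26, 24, 34, 56, 90, 66, 54,
   54, 66, 90, 56, 34, 24, 26, 40, 66, 34, 14, 6, 10, 26, 54, 24, 6].getD k 0

/-- The form `35⟨x,x⟩` on the dual lattice, in the coordinates `(p, q) = G x ∈ ℤ²`. -/
def dualForm (p q : ℤ) : ℤ := 6 * p ^ 2 - 2 * p * q + 6 * q ^ 2

/-- An integer-valued copy of `lamTable`, on which comparisons can be evaluated by `decide`. -/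
def lamInt (k : ℕ) : ℤ :=
  [0, 6, 24, 54, 26, 10, 6, 14, 34, 66, 40, 26, 24, 34, 56, 90, 66, 54,
   54, 66, 90, 56, 34, 24, 26, 40, 66, 34, 14, 6, 10, 26, 54, 24, 6].getD k 0

theorem lamTable_eq (n : ZMod 35) : lamTable n.val = (lamInt n.val : ℚ) := by
  have h : n.val < 35 := ZMod.val_lt n
  generalize n.val = k at h
  interval_cases k <;> norm_num [lamTable, lamInt]

/-- Description of the norms in the class of `n · u` in the coordinates `(p, q) = G x`. -/
theorem mem_normSet_iff (n : ZMod 35) (c : ℚ) :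
    c ∈ normSet n ↔
      ∃ p q : ℤ, ((q - 6 * p : ℤ) : ZMod 35) = n ∧ c = (dualForm p q : ℚ) / 35 := by
  constructor
  · rintro ⟨x, -, ⟨m, hm, hx⟩, rfl⟩
    obtain ⟨a, ha⟩ := hx 0
    obtain ⟨b, hb⟩ := hx 1
    simp only [Pi.sub_apply, Pi.smul_apply, uvec, smul_eq_mul, Matrix.cons_val_zero,
      Matrix.cons_val_one] at ha hb
    have h0 : x 0 = a + m * (34 / 35) := by linarith
    have h1 : x 1 = b + m * (6 / 35) := by linarith
    -- `G u = (6, 2)`, so these are the coordinates of `G (a e₁ + b e₂ + m u)`.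
    refine ⟨6 * a + b + 6 * m, a + 6 * b + 2 * m, ?_, ?_⟩
    · rw [← hm, ZMod.intCast_eq_intCast_iff_dvd_sub]
      exact ⟨a + m, by push_cast; ring⟩
    · simp only [B2, dualForm, h0, h1]
      push_cast
      ring
  · rintro ⟨p, q, hn, rfl⟩
    -- The vector `G⁻¹ (p, q)`.
    refine ⟨![(6 * p - q) / 35, (6 * q - p) / 35], ?_, ⟨q - 6 * p, hn, ?_⟩, ?_⟩
    · intro v
      refine ⟨p * v 0 + q * v 1, ?_⟩
      simp only [B2, Matrix.cons_val_zero, Matrix.cons_val_one]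
      push_cast
      ring
    · intro i
      fin_cases i
      · refine ⟨6 * p - q, ?_⟩
        simp [uvec]
        ring
      · refine ⟨p, ?_⟩
        simp [uvec]
        ring
    · simp only [B2, dualForm, Matrix.cons_val_zero, Matrix.cons_val_one]
      push_cast
      ring

theorem normSet_neg (n : ZMod 35) : normSet (-n) = normSet n := by
  have key : ∀ n : ZMod 35, normSet n ⊆ normSet (-n) := by
    intro n c hc
    obtain ⟨p, q, h, rfl⟩ := (mem_normSet_iff n c).1 hc
    refine (mem_normSet_iff _ _).2 ⟨-p, -q, ?_, ?_⟩
    · rw [← h]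
      push_cast
      ring
    · simp only [dualForm]
      push_cast
      ring
  refine Set.Subset.antisymm ?_ (key n)
  simpa using key (-n)

theorem lamInt_le_ninety : ∀ n : ZMod 35, lamInt n.val ≤ 90 := by decide

theorem lamInt_le_of_box : ∀ p ∈ Finset.Icc (-3 : ℤ) 3, ∀ q ∈ Finset.Icc (-3 : ℤ) 3,
    lamInt ((q - 6 * p : ℤ) : ZMod 35).val ≤ dualForm p q := by decide

theorem exists_dualForm_eq : ∀ n : ZMod 35, ∃ p ∈ Finset.Icc (-3 : ℤ) 3,
    ∃ q ∈ Finset.Icc (-3 : ℤ) 3,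
      ((q - 6 * p : ℤ) : ZMod 35) = n ∧ dualForm p q = lamInt n.val := by decide

theorem lamInt_le_dualForm (p q : ℤ) :
    lamInt ((q - 6 * p : ℤ) : ZMod 35).val ≤ dualForm p q := by
  by_cases h : 90 ≤ dualForm p q
  · exact (lamInt_le_ninety _).trans h
  · unfold dualForm at h
    have hq : q ^ 2 < 4 ^ 2 := by nlinarith [sq_nonneg (6 * p - q)]
    have hp : p ^ 2 < 4 ^ 2 := by nlinarith [sq_nonneg (6 * q - p)]
    have hq' := abs_lt.1 (abs_lt_of_sq_lt_sq hq (by norm_num))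
    have hp' := abs_lt.1 (abs_lt_of_sq_lt_sq hp (by norm_num))
    exact lamInt_le_of_box p (Finset.mem_Icc.2 (by omega)) q (Finset.mem_Icc.2 (by omega))

/-- `λ(n) = λ(-n)` for all `n ∈ ℤ/35ℤ`, and `35·λ(n)` takes the values
`0, 6, 24, 54, 26, 10, 6, 14, 34, 66, 40, 26, 24, 34, 56, 90, 66, 54` for
`n = 0, ±1, ±2, …, ±17` respectively. -/
theorem stmt_8 :
    (∀ n : ZMod 35, ∀ c : ℚ, IsLeast (normSet n) c → IsLeast (normSet (-n)) c) ∧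
    (∀ n : ZMod 35, IsLeast (normSet n) (lamTable n.val / 35)) := by
  refine ⟨fun n c hc => by rwa [normSet_neg], fun n => ⟨?_, ?_⟩⟩
  · obtain ⟨p, -, q, -, h, hv⟩ := exists_dualForm_eq n
    exact (mem_normSet_iff _ _).2 ⟨p, q, h, by rw [lamTable_eq, hv]⟩
  · intro c hc
    obtain ⟨p, q, rfl, rfl⟩ := (mem_normSet_iff n c).1 hc
    rw [lamTable_eq]
    have h : (lamInt ((q - 6 * p : ℤ) : ZMod 35).val : ℚ) ≤ dualForm p q := by
      exact_mod_cast lamInt_le_dualForm p q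
    linarith
end
end

section
/- The group of matrices U ∈ GL₂(ℤ) satisfying U·G·Uᵀ = G, where G = [[6,1],[1,6]], is exactly {I₂, −I₂, S, −S} with S = [[0,1],[1,0]]; in particular this group has order 4 and is generated by S and −I₂. -/
/-! Writing `G` as a quadratic form, `6a² + 2ab + 6b² = 5a² + 5b² + (a + b)²`, so the only lattice
vectors of norm `6` are `±e₁` and `±e₂` (`norm_six`). The rows of an isometry `U` are two such
vectors with inner product `1`; since `⟨±e₁, ±e₁⟩` and `⟨±e₂, ±e₂⟩` are `±6`, one row is `±e₁` and
the other `±e₂`, and since `⟨e₁, e₂⟩ = 1` the signs agree (`mem_isometries_iff`). The order and the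
generation by `S` and `-I` are then read off the explicit list. -/


open Matrix

/-- The Gram matrix `G = [[6,1],[1,6]]` of the lattice `R`. -/
def Gmat : Matrix (Fin 2) (Fin 2) ℤ := !![6, 1; 1, 6]

/-- The swap matrix `S = [[0,1],[1,0]]`. -/
def Smat : Matrix (Fin 2) (Fin 2) ℤ := !![0, 1; 1, 0]

/-- The vectors of norm `6` in the lattice are `±e₁` and `±e₂`. -/
theorem norm_six {a b : ℤ} (h : 6 * a ^ 2 + 2 * a * b + 6 * b ^ 2 = 6) :
    (a = 1 ∧ b = 0) ∨ (a = -1 ∧ b = 0) ∨ (a = 0 ∧ b = 1) ∨ (a = 0 ∧ b = -1) := by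
  have ha : -1 ≤ a ∧ a ≤ 1 := by
    constructor <;> nlinarith [sq_nonneg (a + b), sq_nonneg b]
  have hb : -1 ≤ b ∧ b ≤ 1 := by
    constructor <;> nlinarith [sq_nonneg (a + b), sq_nonneg a]
  obtain ⟨ha₁, ha₂⟩ := ha
  obtain ⟨hb₁, hb₂⟩ := hb
  interval_cases a <;> interval_cases b <;> simp_all

theorem mem_isometries_iff (U : Matrix (Fin 2) (Fin 2) ℤ) :
    (IsUnit U.det ∧ U * Gmat * Uᵀ = Gmat) ↔ U = 1 ∨ U = -1 ∨ U = Smat ∨ U = -Smat := by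
  constructor
  · rintro ⟨-, h⟩
    obtain ⟨a, b, c, d, rfl⟩ : ∃ a b c d : ℤ, U = !![a, b; c, d] :=
      ⟨_, _, _, _, Matrix.eta_fin_two U⟩
    have h₀₀ := congrFun (congrFun h 0) 0
    have h₀₁ := congrFun (congrFun h 0) 1
    have h₁₁ := congrFun (congrFun h 1) 1
    simp [Gmat, Matrix.mul_apply, Fin.sum_univ_two] at h₀₀ h₀₁ h₁₁
    have hr₀ := norm_six (a := a) (b := b) (by linarith)
    have hr₁ := norm_six (a := c) (b := d) (by linarith)
    -- Of the sixteen pairs of rows, the inner product `h₀₁` leaves four.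
    rcases hr₀ with ⟨rfl, rfl⟩ | ⟨rfl, rfl⟩ | ⟨rfl, rfl⟩ | ⟨rfl, rfl⟩ <;>
      rcases hr₁ with ⟨rfl, rfl⟩ | ⟨rfl, rfl⟩ | ⟨rfl, rfl⟩ | ⟨rfl, rfl⟩ <;>
      first
      | (exfalso; omega)
      | (unfold Smat; decide)
  · rintro (rfl | rfl | rfl | rfl) <;> constructor
    all_goals first
      | (unfold Gmat Smat; decide)
      | (unfold Gmat; decide)
      | simp [Smat, Matrix.det_fin_two]

/-- The group `O(R)` of matrices `U ∈ GL₂(ℤ)` with `U·G·Uᵀ = G` is exactly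
`{I, -I, S, -S}`; in particular it has order 4 and every element is a product of
powers of `S` and `-I`. -/
theorem stmt_14 :
    {U : Matrix (Fin 2) (Fin 2) ℤ | IsUnit U.det ∧ U * Gmat * Uᵀ = Gmat}
      = {1, -1, Smat, -Smat} ∧
    Set.ncard {U : Matrix (Fin 2) (Fin 2) ℤ | IsUnit U.det ∧ U * Gmat * Uᵀ = Gmat} = 4 ∧
    (∀ U : Matrix (Fin 2) (Fin 2) ℤ, (IsUnit U.det ∧ U * Gmat * Uᵀ = Gmat) →
      ∃ a b : ℕ, U = Smat ^ a * (-1) ^ b) := by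
  have hset : {U : Matrix (Fin 2) (Fin 2) ℤ | IsUnit U.det ∧ U * Gmat * Uᵀ = Gmat}
      = {1, -1, Smat, -Smat} := Set.ext mem_isometries_iff
  refine ⟨hset, ?_, fun U hU => ?_⟩
  · have hcard : ({1, -1, Smat, -Smat} : Finset (Matrix (Fin 2) (Fin 2) ℤ)).card = 4 := by
      unfold Smat
      decide
    rw [hset, ← hcard, ← Set.ncard_coe_finset]
    simp
  · rcases (mem_isometries_iff U).1 hU with rfl | rfl | rfl | rfl
    · exact ⟨0, 0, by simp⟩
    · exact ⟨0, 1, by simp⟩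
    · exact ⟨1, 0, by simp⟩
    · exact ⟨1, 1, by simp⟩
end
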